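/- Assume D : 𝒞 → ℝⁿ satisfies D(0) = 0 and (A5) with constant κ ∈ (0,1). Then for any ξ₁, ξ₂ ∈ 𝒞 there exists α ≤ 0 such that the constant path α𝟙 satisfies α𝟙 ≤_D ξ₁ and α𝟙 ≤_D ξ₂; that is, α ≤ ξ_kⁱ(θ) for all k ∈ {1,2}, all components i and all θ ∈ [−r₀,0], and α − Dⁱ(α𝟙) ≤ ξ_kⁱ(0) − Dⁱ(ξ_k) for all k ∈ {1,2} and all i. -/

import Mathlib

open MeasureTheory Filter
open scoped ENNReal NNReal

noncomputable section

/-- The path space 𝒞 = C([-r₀,0]; ℝⁿ), endowed with the uniform norm. -/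
abbrev PathSp (r₀ : ℝ) (n : ℕ) := C(Set.Icc (-r₀) (0:ℝ), EuclideanSpace ℝ (Fin n))

/-- Componentwise pointwise order ξ ≤ η on the path space. -/
def PathLe {r₀ : ℝ} {n : ℕ} (ξ η : PathSp r₀ n) : Prop :=
  ∀ (θ : Set.Icc (-r₀) (0:ℝ)) (i : Fin n), ξ θ i ≤ η θ i

/-- The point 0 of the interval [-r₀,0]. -/
def zpt {r₀ : ℝ} (hr₀ : 0 < r₀) : Set.Icc (-r₀) (0:ℝ) :=
  ⟨0, ⟨by linarith, le_refl 0⟩⟩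

/-- max_{1≤i≤n} ‖ξⁱ − ηⁱ‖_∞. -/
def MaxCompDist {r₀ : ℝ} {n : ℕ} (ξ η : PathSp r₀ n) : ℝ :=
  ⨆ i : Fin n, ⨆ θ : Set.Icc (-r₀) (0:ℝ), |ξ θ i - η θ i|

/-- The order ξ ≤_D η on the path space: ξ ≤ η and ξ(0) − D(ξ) ≤ η(0) − D(η). -/
def PathLeD {r₀ : ℝ} (hr₀ : 0 < r₀) {n : ℕ}
    (D : PathSp r₀ n → EuclideanSpace ℝ (Fin n)) (ξ η : PathSp r₀ n) : Prop :=
  PathLe ξ η ∧ ∀ i, ξ (zpt hr₀) i - D ξ i ≤ η (zpt hr₀) i - D η i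

/-- The constant path r𝟙 all of whose components equal r. -/
def constPath (r₀ : ℝ) (n : ℕ) (r : ℝ) : PathSp r₀ n :=
  ContinuousMap.const _ ((WithLp.equiv 2 (Fin n → ℝ)).symm fun _ => r)

/-- The time shift [-r₀,0] ∋ θ ↦ t + θ ∈ [-r₀,∞) for t ≥ 0. -/
def segMap {r₀ : ℝ} (t : ℝ) (ht : 0 ≤ t) (θ : Set.Icc (-r₀) (0:ℝ)) : Set.Ici (-r₀ : ℝ) :=
  ⟨t + θ.1, by have h := θ.2.1; simp only [Set.mem_Ici]; linarith⟩

/-- The segment x_t ∈ 𝒞 of a continuous function x : [-r₀,∞) → ℝⁿ, x_t(θ) = x(t+θ). -/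
def segmentAt {r₀ : ℝ} {n : ℕ} (x : C(Set.Ici (-r₀ : ℝ), EuclideanSpace ℝ (Fin n)))
    (t : ℝ) (ht : 0 ≤ t) : PathSp r₀ n :=
  ⟨fun θ => x (segMap t ht θ),
   x.continuous.comp ((continuous_const.add continuous_subtype_val).subtype_mk _)⟩

/-- A point t ≥ 0 viewed as an element of [-r₀, ∞). -/
def iciPt {r₀ : ℝ} (hr₀ : 0 < r₀) (t : ℝ) (ht : 0 ≤ t) : Set.Ici (-r₀ : ℝ) :=
  ⟨t, by simp only [Set.mem_Ici]; linarith⟩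

/-- The path space carries the Borel σ-algebra. -/
instance instPathSpMeas (r₀ : ℝ) (n : ℕ) : MeasurableSpace (PathSp r₀ n) := borel _
instance (r₀ : ℝ) (n : ℕ) : BorelSpace (PathSp r₀ n) := ⟨rfl⟩

/-- A function f : 𝒞 → ℝ is D-increasing if ξ ≤_D η implies f(ξ) ≤ f(η). -/
def DIncreasing {r₀ : ℝ} (hr₀ : 0 < r₀) {n : ℕ}
    (D : PathSp r₀ n → EuclideanSpace ℝ (Fin n)) (f : PathSp r₀ n → ℝ) : Prop :=
  ∀ ξ η, PathLeD hr₀ D ξ η → f ξ ≤ f η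

/-- μ ≤_D ν : ∫ f dμ ≤ ∫ f dν for every bounded Borel measurable D-increasing f. -/
def MeasLeD {r₀ : ℝ} (hr₀ : 0 < r₀) {n : ℕ}
    (D : PathSp r₀ n → EuclideanSpace ℝ (Fin n)) (μ ν : Measure (PathSp r₀ n)) : Prop :=
  ∀ f : PathSp r₀ n → ℝ, Measurable f → (∃ C, ∀ ξ, |f ξ| ≤ C) →
    DIncreasing hr₀ D f → ∫ ξ, f ξ ∂μ ≤ ∫ ξ, f ξ ∂ν

/-- π is a coupling of (μ, ν). -/
def IsCoupling {r₀ : ℝ} {n : ℕ} (π : Measure (PathSp r₀ n × PathSp r₀ n))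
    (μ ν : Measure (PathSp r₀ n)) : Prop :=
  IsProbabilityMeasure π ∧ π.map Prod.fst = μ ∧ π.map Prod.snd = ν

/-- The L²-Wasserstein distance W₂(μ,ν) on the path space. -/
def W2 {r₀ : ℝ} {n : ℕ} (μ ν : Measure (PathSp r₀ n)) : ℝ :=
  Real.sqrt (⨅ π ∈ {π : Measure (PathSp r₀ n × PathSp r₀ n) | IsCoupling π μ ν},
    ∫⁻ p, (‖p.1 - p.2‖₊ : ℝ≥0∞) ^ 2 ∂π).toReal

/-- μ ∈ 𝒫₂(𝒞): a Borel probability measure with finite second moment. -/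
def P2 {r₀ : ℝ} {n : ℕ} (μ : Measure (PathSp r₀ n)) : Prop :=
  IsProbabilityMeasure μ ∧ Integrable (fun ξ : PathSp r₀ n => ‖ξ‖^2) μ

/-!
Write `M` for a bound on `‖ξ‖` and let `α ≤ -M`. The constant path `α𝟙` lies below `ξ`, and its
componentwise distance to `ξ` is at most `|α| + M`, so by (A5) replacing `ξ` by `α𝟙` moves each
component of `D` by at most `κ (|α| + M)`. The gain `ξ(0) - α ≥ |α| - M` dominates this as soon as
`(1 - κ) |α| ≥ (1 + κ) M`, which holds for all sufficiently negative `α` because `κ < 1`.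
-/

theorem norm_apply_coord_le_norm {X ι : Type*} [TopologicalSpace X] [CompactSpace X] [Fintype ι]
    {p : ℝ≥0∞} [Fact (1 ≤ p)] {β : ι → Type*} [∀ i, SeminormedAddCommGroup (β i)]
    (f : C(X, PiLp p β)) (x : X) (i : ι) : ‖f x i‖ ≤ ‖f‖ :=
  (PiLp.norm_apply_le (f x) i).trans (f.norm_coe_le_norm x)

section

variable {r₀ : ℝ} {n : ℕ}

theorem constPath_apply (α : ℝ) (θ : Set.Icc (-r₀) (0 : ℝ)) (i : Fin n) :
    constPath r₀ n α θ i = α :=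
  rfl

theorem constPath_pathLe {ξ : PathSp r₀ n} {α : ℝ} (h : α ≤ -‖ξ‖) :
    PathLe (constPath r₀ n α) ξ := fun θ i ↦
  h.trans (neg_le_of_abs_le (norm_apply_coord_le_norm ξ θ i))

theorem maxCompDist_le {ξ η : PathSp r₀ n} {C : ℝ} (hC : 0 ≤ C)
    (h : ∀ θ i, |ξ θ i - η θ i| ≤ C) : MaxCompDist ξ η ≤ C :=
  Real.iSup_le (fun i ↦ Real.iSup_le (fun θ ↦ h θ i) hC) hC

-- The triangle inequality for `‖constPath r₀ n α - ξ‖` would give `√n * |α|` in place of `|α|`.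
theorem maxCompDist_constPath_le (α : ℝ) (ξ : PathSp r₀ n) :
    MaxCompDist (constPath r₀ n α) ξ ≤ |α| + ‖ξ‖ :=
  maxCompDist_le (by positivity) fun θ i ↦
    calc |constPath r₀ n α θ i - ξ θ i| ≤ |α| + |ξ θ i| := abs_sub α (ξ θ i)
      _ ≤ |α| + ‖ξ‖ := by gcongr; exact norm_apply_coord_le_norm ξ θ i

variable {D : PathSp r₀ n → EuclideanSpace ℝ (Fin n)} {κ : ℝ}

theorem abs_map_constPath_sub_apply_le (hκ₀ : 0 ≤ κ)
    (hA5 : ∀ ξ η : PathSp r₀ n, ‖D ξ - D η‖ ≤ κ * MaxCompDist ξ η)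
    (ξ : PathSp r₀ n) (α : ℝ) (i : Fin n) :
    |D (constPath r₀ n α) i - D ξ i| ≤ κ * (|α| + ‖ξ‖) :=
  calc |D (constPath r₀ n α) i - D ξ i|
    _ ≤ ‖D (constPath r₀ n α) - D ξ‖ := PiLp.norm_apply_le (D (constPath r₀ n α) - D ξ) i
    _ ≤ κ * MaxCompDist (constPath r₀ n α) ξ := hA5 _ ξ
    _ ≤ κ * (|α| + ‖ξ‖) := by gcongr; exact maxCompDist_constPath_le α ξ

theorem constPath_pathLeD (hr₀ : 0 < r₀) (hκ₀ : 0 ≤ κ) (hκ₁ : κ < 1)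
    (hA5 : ∀ ξ η : PathSp r₀ n, ‖D ξ - D η‖ ≤ κ * MaxCompDist ξ η)
    {ξ : PathSp r₀ n} {α : ℝ} (hα : (1 + κ) / (1 - κ) * ‖ξ‖ ≤ -α) :
    PathLeD hr₀ D (constPath r₀ n α) ξ := by
  have hκ : 0 < 1 - κ := sub_pos.2 hκ₁
  have ratio_ge_one : 1 ≤ (1 + κ) / (1 - κ) := (one_le_div hκ).2 (by linarith)
  have norm_le : ‖ξ‖ ≤ -α := (le_mul_of_one_le_left (norm_nonneg ξ) ratio_ge_one).trans hα
  have abs_α : |α| = -α := abs_of_nonpos (by linarith [norm_nonneg ξ])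
  have gain_dominates : κ * (|α| + ‖ξ‖) ≤ -α - ‖ξ‖ := by
    rw [div_mul_eq_mul_div, div_le_iff₀ hκ] at hα
    rw [abs_α]
    linarith
  have le_ξ : PathLe (constPath r₀ n α) ξ := constPath_pathLe (le_neg_of_le_neg norm_le)
  refine ⟨le_ξ, fun i ↦ ?_⟩
  have D_shift := neg_le_of_abs_le (abs_map_constPath_sub_apply_le hκ₀ hA5 ξ α i)
  have ξ_zero_ge := neg_le_of_abs_le (norm_apply_coord_le_norm ξ (zpt hr₀) i)
  rw [constPath_apply]
  linarith

theorem stmt6_general (hr₀ : 0 < r₀) (hκ₀ : 0 ≤ κ) (hκ₁ : κ < 1)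
    (hA5 : ∀ ξ η : PathSp r₀ n, ‖D ξ - D η‖ ≤ κ * MaxCompDist ξ η)
    {S : Set (PathSp r₀ n)} (hS : Bornology.IsBounded S) :
    ∀ᶠ α in atBot, ∀ ξ ∈ S, PathLeD hr₀ D (constPath r₀ n α) ξ := by
  obtain ⟨M, norm_le_M⟩ := hS.exists_norm_le
  have ratio_nonneg : 0 ≤ (1 + κ) / (1 - κ) := div_nonneg (by linarith) (by linarith)
  filter_upwards [eventually_le_atBot (-((1 + κ) / (1 - κ) * M))] with α hα ξ hξ
  exact constPath_pathLeD hr₀ hκ₀ hκ₁ hA5 <|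
    (mul_le_mul_of_nonneg_left (norm_le_M ξ hξ) ratio_nonneg).trans (le_neg_of_le_neg hα)

end

/-- under D(0) = 0 and (A5), for any ξ₁, ξ₂ ∈ 𝒞 there is α ≤ 0 such that
the constant path α𝟙 satisfies α𝟙 ≤_D ξ₁ and α𝟙 ≤_D ξ₂. -/
theorem stmt6 {r₀ : ℝ} (hr₀ : 0 < r₀) {n : ℕ} (hn : 1 ≤ n)
    (D : PathSp r₀ n → EuclideanSpace ℝ (Fin n)) (κ : ℝ)
    (hκ₀ : 0 < κ) (hκ₁ : κ < 1)
    (hD0 : D 0 = 0)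
    (hA5 : ∀ ξ η : PathSp r₀ n, ‖D ξ - D η‖ ≤ κ * MaxCompDist ξ η)
    (ξ₁ ξ₂ : PathSp r₀ n) :
    ∃ α : ℝ, α ≤ 0 ∧
      PathLeD hr₀ D (constPath r₀ n α) ξ₁ ∧
      PathLeD hr₀ D (constPath r₀ n α) ξ₂ := by
  obtain ⟨α, below, α_nonpos⟩ := ((stmt6_general hr₀ hκ₀.le hκ₁ hA5
    (Set.toFinite {ξ₁, ξ₂}).isBounded).and (eventually_le_atBot 0)).exists
  exact ⟨α, α_nonpos, below ξ₁ (.inl rfl), below ξ₂ (.inr rfl)⟩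

end
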